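/- Let V be a finite set of vehicles partitioned into stations, let R be a finite set of requests, and for each vehicle v let F_v be a downward-closed family of subsets of R containing ∅ with a cost function c(v, ·) on F_v satisfying c(v, ∅) = 0. Assume vehicles parked at the same station are interchangeable: whenever v and v' belong to the same station, F_v = F_{v'} and c(v, G) = c(v', G) for all G ∈ F_v. For a station s write F_s and c(s, ·) for the common family and cost, and |V_s| for the number of vehicles at s. Then the minimum of Σ_v c(v, g(v)) over all functions g assigning to each vehicle v a group g(v) ∈ F_v such that every request of R lies in exactly one of the sets g(v), equals the minimum of Σ_s Σ_{G ∈ A_s} c(s, G) over all choices of, for each station s, a collection A_s ⊆ F_s of at most |V_s| pairwise disjoint nonempty groups, such that the groups in ⋃_s A_s are pairwise disjoint and their union is R. In particular, generating feasible groups for one representative vehicle per station and allowing up to |V_s| group assignments to that representative preserves the optimal value of the vehicle-group assignment problem. -/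

import Mathlib

/-!
An exact cover is a disjoint family, so no two vehicles receive the same nonempty group, and
collecting the nonempty groups station by station loses nothing. Conversely, at most `|V_s|` groups
can be handed to distinct vehicles of station `s`, the remaining vehicles staying idle with `∅`.
Both passages preserve feasibility, the covering condition and the total cost, so the two problems
attain exactly the same costs, not just the same minimum.
-/

open Finset Function

/-- The nonempty groups which the assignment `g` gives to the vehicles of station `s`. -/
def stationGroups {ρ ν σ : Type*} [DecidableEq ρ] [Fintype ν] [DecidableEq σ]
    (st : ν → σ) (g : ν → Finset ρ) (s : σ) : Finset (Finset ρ) :=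
  (({v | st v = s} : Finset ν).image g).erase ∅

theorem exists_image_erase_eq_and_injOn {α ν : Type*} [DecidableEq α] {a : α} {T : Finset ν}
    {B : Finset α} (ha : a ∉ B) (hcard : #B ≤ #T) :
    ∃ h : ν → α, (T.image h).erase a = B ∧ Set.InjOn h {v | h v ≠ a} := by
  obtain ⟨e⟩ : Nonempty (B ↪ T) := Embedding.nonempty_of_card_le (by simpa using hcard)
  have e_inj : Injective fun b ↦ (e b : ν) := Subtype.val_injective.comp e.injective
  let h : ν → α := extend (fun b ↦ (e b : ν)) Subtype.val fun _ ↦ a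
  have h_apply (b : B) : h (e b) = b := e_inj.extend_apply _ _ b
  have eq_of_ne {v : ν} (hv : h v ≠ a) : ∃ b : B, (e b : ν) = v := by
    by_contra hb
    exact hv (extend_apply' _ _ v hb)
  refine ⟨h, ?_, fun v hv w hw hvw ↦ ?_⟩
  · ext x
    simp only [mem_erase, mem_image]
    constructor
    · rintro ⟨hx, v, -, rfl⟩
      obtain ⟨b, rfl⟩ := eq_of_ne hx
      exact (h_apply b).symm ▸ b.2
    · exact fun hx ↦ ⟨ne_of_mem_of_not_mem hx ha, _, (e ⟨x, hx⟩).2, h_apply ⟨x, hx⟩⟩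
  · obtain ⟨b, rfl⟩ := eq_of_ne hv
    obtain ⟨b', rfl⟩ := eq_of_ne hw
    rw [h_apply, h_apply] at hvw
    rw [Subtype.ext hvw]

theorem pairwise_disjoint_of_existsUnique_mem {ρ ν : Type*} {R : Finset ρ} {g : ν → Finset ρ}
    (hsub : ∀ v, g v ⊆ R) (hcover : ∀ r ∈ R, ∃! v, r ∈ g v) : Pairwise (Disjoint on g) :=
  fun v _ hvw ↦ disjoint_left.2 fun r hv hw ↦ hvw ((hcover r (hsub v hv)).unique hv hw)

theorem injOn_ne_bot_of_pairwise_disjoint {ι α : Type*} [PartialOrder α] [OrderBot α] {f : ι → α}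
    (hf : Pairwise (Disjoint on f)) : Set.InjOn f {i | f i ≠ ⊥} := by
  intro i hi j _ hij
  by_contra hne
  have hdisj : Disjoint (f i) (f j) := hf hne
  rw [← hij, disjoint_self] at hdisj
  exact hi hdisj

section StationGroups

variable {ρ ν σ : Type*} [DecidableEq ρ] [Fintype ν] [DecidableEq σ]
  {st : ν → σ} {g : ν → Finset ρ}

theorem mem_stationGroups {s : σ} {G : Finset ρ} :
    G ∈ stationGroups st g s ↔ G ≠ ∅ ∧ ∃ v, st v = s ∧ g v = G := by
  simp [stationGroups]

theorem mem_stationGroups_self {v : ν} : g v ∈ stationGroups st g (st v) ↔ g v ≠ ∅ :=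
  mem_stationGroups.trans (and_iff_left ⟨v, rfl, rfl⟩)

theorem card_stationGroups_le (s : σ) : #(stationGroups st g s) ≤ #{v | st v = s} :=
  card_erase_le.trans card_image_le

theorem forall_mem_stationGroups_iff {F : σ → Set (Finset ρ)} (hempty : ∀ v, ∅ ∈ F (st v)) :
    (∀ s, ∀ G ∈ stationGroups st g s, G ∈ F s) ↔ ∀ v, g v ∈ F (st v) := by
  constructor
  · intro h v
    by_cases hv : g v = ∅
    · exact hv ▸ hempty v
    · exact h _ _ (mem_stationGroups_self.2 hv)
  · intro h s G hG
    obtain ⟨-, v, rfl, rfl⟩ := mem_stationGroups.1 hG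
    exact h v

theorem disjoint_of_mem_stationGroups (hg : Pairwise (Disjoint on g)) {s t : σ} {G G' : Finset ρ}
    (hG : G ∈ stationGroups st g s) (hG' : G' ∈ stationGroups st g t) (hne : G ≠ G') :
    Disjoint G G' := by
  obtain ⟨-, v, -, rfl⟩ := mem_stationGroups.1 hG
  obtain ⟨-, w, -, rfl⟩ := mem_stationGroups.1 hG'
  exact hg (ne_of_apply_ne g hne)

theorem existsUnique_mem_stationGroups_iff
    (hinj : Set.InjOn (fun v ↦ (st v, g v)) {v | g v ≠ ∅}) (r : ρ) :
    (∃! p : σ × Finset ρ, p.2 ∈ stationGroups st g p.1 ∧ r ∈ p.2) ↔ ∃! v, r ∈ g v := by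
  have self_mem {v : ν} (hv : r ∈ g v) : g v ∈ stationGroups st g (st v) :=
    mem_stationGroups_self.2 (ne_empty_of_mem hv)
  constructor
  · rintro ⟨⟨s, G⟩, ⟨hG, hr⟩, huniq⟩
    obtain ⟨-, v, rfl, rfl⟩ := mem_stationGroups.1 hG
    exact ⟨v, hr, fun w hw ↦ hinj (ne_empty_of_mem hw) (ne_empty_of_mem hr)
      (huniq (st w, g w) ⟨self_mem hw, hw⟩)⟩
  · rintro ⟨v, hr, huniq⟩
    refine ⟨(st v, g v), ⟨self_mem hr, hr⟩, ?_⟩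
    rintro ⟨s, G⟩ ⟨hG, hrG⟩
    obtain ⟨-, w, rfl, rfl⟩ := mem_stationGroups.1 hG
    rw [huniq w hrG]

theorem sum_stationGroups [Fintype σ] {M : Type*} [AddCommMonoid M] {c : σ → Finset ρ → M}
    (hc : ∀ v, c (st v) ∅ = 0) (hinj : Set.InjOn (fun v ↦ (st v, g v)) {v | g v ≠ ∅}) :
    ∑ s, ∑ G ∈ stationGroups st g s, c s G = ∑ v, c (st v) (g v) := by
  have sum_erase_empty (s : σ) : ∑ G ∈ stationGroups st g s, c s G =
      ∑ G ∈ ({v | st v = s} : Finset ν).image g, c s G := by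
    refine sum_subset (erase_subset _ _) fun G hG hG' ↦ ?_
    obtain ⟨v, hv, rfl⟩ := mem_image.1 hG
    obtain rfl := (mem_filter.1 hv).2
    rw [not_not.1 (mt mem_stationGroups_self.2 hG'), hc]
  have sum_image_fiber (s : σ) : ∑ G ∈ ({v | st v = s} : Finset ν).image g, c s G =
      ∑ v with st v = s, c s (g v) := by
    refine sum_image_of_pairwise_eq_zero fun v hv w hw hne hvw ↦ ?_
    obtain rfl := (mem_filter.1 hv).2
    have idle : g v = ∅ := by
      by_contra hv'
      exact hne (hinj hv' (hvw ▸ hv' : g w ≠ ∅) (Prod.ext (mem_filter.1 hw).2.symm hvw))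
    rw [idle, hc]
  calc ∑ s, ∑ G ∈ stationGroups st g s, c s G
      = ∑ s, ∑ v with st v = s, c s (g v) :=
        sum_congr rfl fun s _ ↦ (sum_erase_empty s).trans (sum_image_fiber s)
    _ = ∑ s, ∑ v with st v = s, c (st v) (g v) :=
        sum_congr rfl fun s _ ↦ sum_congr rfl fun v hv ↦ by rw [(mem_filter.1 hv).2]
    _ = ∑ v, c (st v) (g v) := sum_fiberwise univ st _

theorem exists_stationGroups_eq {A : σ → Finset (Finset ρ)} (hA : ∀ s, ∅ ∉ A s)
    (hcard : ∀ s, #(A s) ≤ #{v | st v = s}) :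
    ∃ g : ν → Finset ρ, stationGroups st g = A ∧
      Set.InjOn (fun v ↦ (st v, g v)) {v | g v ≠ ∅} := by
  choose h himage hinj using fun s ↦ exists_image_erase_eq_and_injOn (hA s) (hcard s)
  refine ⟨fun v ↦ h (st v) v, funext fun s ↦ ?_, fun v hv w hw hvw ↦ ?_⟩
  · rw [stationGroups, ← himage s]
    congr 1
    exact image_congr fun v hv ↦ by rw [(mem_filter.1 hv).2]
  · obtain ⟨hst, hgroup⟩ := Prod.ext_iff.1 hvw
    dsimp only at hst hgroup
    have hw_st : h (st v) w ≠ ∅ := by rw [hst]; exact hw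
    exact hinj (st v) hv hw_st (by rw [hgroup, hst])

end StationGroups

theorem station_representative_assignment_general {ρ ν σ M : Type*}
    [Fintype ν] [Fintype σ] [DecidableEq σ] [AddCommMonoid M]
    (st : ν → σ) (R : Finset ρ) (F : σ → Set (Finset ρ)) (c : σ → Finset ρ → M)
    (hR : ∀ v, ∀ S ∈ F (st v), S ⊆ R) (hempty : ∀ v, ∅ ∈ F (st v)) (hc : ∀ v, c (st v) ∅ = 0) :
    {x : M | ∃ g : ν → Finset ρ,
        (∀ v, g v ∈ F (st v)) ∧
        (∀ r ∈ R, ∃! v, r ∈ g v) ∧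
        ∑ v, c (st v) (g v) = x}
      = {x : M | ∃ A : σ → Finset (Finset ρ),
        (∀ s, ∀ G ∈ A s, G ∈ F s ∧ G ≠ ∅) ∧
        (∀ s, #(A s) ≤ #{v | st v = s}) ∧
        (∀ s, ∀ G ∈ A s, ∀ G' ∈ A s, G ≠ G' → Disjoint G G') ∧
        (∀ r ∈ R, ∃! p : σ × Finset ρ, p.2 ∈ A p.1 ∧ r ∈ p.2) ∧
        ∑ s, ∑ G ∈ A s, c s G = x} := by
  classical
  ext x
  constructor
  · rintro ⟨g, hg, hcover, rfl⟩
    have hdisj := pairwise_disjoint_of_existsUnique_mem (fun v ↦ hR v _ (hg v)) hcover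
    have hinj : Set.InjOn (fun v ↦ (st v, g v)) {v | g v ≠ ∅} :=
      (injOn_ne_bot_of_pairwise_disjoint hdisj).of_comp (f := fun v ↦ (st v, g v)) (g := Prod.snd)
    exact ⟨stationGroups st g,
      fun s G hG ↦ ⟨(forall_mem_stationGroups_iff hempty).2 hg s G hG, (mem_stationGroups.1 hG).1⟩,
      card_stationGroups_le,
      fun s G hG G' hG' ↦ disjoint_of_mem_stationGroups hdisj hG hG',
      fun r hr ↦ (existsUnique_mem_stationGroups_iff hinj r).2 (hcover r hr),
      sum_stationGroups hc hinj⟩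
  · rintro ⟨A, hA, hcard, -, hcover, rfl⟩
    obtain ⟨g, rfl, hinj⟩ := exists_stationGroups_eq (fun s h ↦ (hA s ∅ h).2 rfl) hcard
    exact ⟨g, (forall_mem_stationGroups_iff hempty).1 fun s G hG ↦ (hA s G hG).1,
      fun r hr ↦ (existsUnique_mem_stationGroups_iff hinj r).1 (hcover r hr),
      (sum_stationGroups hc hinj).symm⟩

/-- Station symmetry in the vehicle-group assignment problem.  Let the finite vehicle
set `ν` be partitioned into stations by `st : ν → σ`, let `R` be a finite set of
requests, and for each vehicle `v` let `F v` be a downward-closed family of subsets of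
`R` containing `∅`, with cost function `c v` satisfying `c v ∅ = 0`.  Vehicles at the
same station are interchangeable: `F v` and `c v` depend only on the station `st v`,
with common family `Fst s` and cost `cst s` at station `s`.  Then the minimum of
`∑_v c v (g v)` over all assignments `g` of a feasible group to each vehicle such that
every request of `R` lies in exactly one assigned group equals the minimum of
`∑_s ∑_{G ∈ A s} cst s G` over all choices, for each station `s`, of a collection
`A s ⊆ Fst s` of at most `|V_s|` pairwise disjoint nonempty groups such that the groups
in `⋃_s A s` are pairwise disjoint with union `R` (every request lies in exactly one
group of exactly one station). -/
theorem station_representative_assignment {ρ ν σ : Type*}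
    [DecidableEq ρ] [Fintype ν] [Fintype σ] [DecidableEq σ]
    (st : ν → σ) (R : Finset ρ)
    (F : ν → Set (Finset ρ)) (c : ν → Finset ρ → ℝ)
    (Fst : σ → Set (Finset ρ)) (cst : σ → Finset ρ → ℝ)
    (hFst : ∀ v : ν, F v = Fst (st v))
    (hcst : ∀ (v : ν) (G : Finset ρ), c v G = cst (st v) G)
    (hR : ∀ v : ν, ∀ S ∈ F v, S ⊆ R)
    (hdc : ∀ v : ν, ∀ S ∈ F v, ∀ T ⊆ S, T ∈ F v)
    (hempty : ∀ v : ν, (∅ : Finset ρ) ∈ F v)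
    (hc0 : ∀ v : ν, c v ∅ = 0) :
    sInf {x : ℝ | ∃ g : ν → Finset ρ,
        (∀ v : ν, g v ∈ F v) ∧
        (∀ r ∈ R, ∃! v : ν, r ∈ g v) ∧
        ∑ v : ν, c v (g v) = x}
      = sInf {x : ℝ | ∃ A : σ → Finset (Finset ρ),
        (∀ s : σ, ∀ G ∈ A s, G ∈ Fst s ∧ G ≠ ∅) ∧
        (∀ s : σ, (A s).card ≤ (Finset.univ.filter fun v : ν => st v = s).card) ∧
        (∀ s : σ, ∀ G ∈ A s, ∀ G' ∈ A s, G ≠ G' → Disjoint G G') ∧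
        (∀ r ∈ R, ∃! p : σ × Finset ρ, p.2 ∈ A p.1 ∧ r ∈ p.2) ∧
        ∑ s : σ, ∑ G ∈ A s, cst s G = x} := by
  obtain rfl : F = fun v ↦ Fst (st v) := funext hFst
  obtain rfl : c = fun v ↦ cst (st v) := funext₂ hcst
  exact congrArg sInf (station_representative_assignment_general st R Fst cst hR hempty hc0)
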